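/- Let p ≥ 2 be an even integer, d, N ≥ 2, and X = (x_1,…,x_N) ∈ S(N,d) with coherence c(X) = max_{k≠ℓ}|⟨x_k,x_ℓ⟩| < 1. Then FP_{p,N,d}(X) = (FP_{p,2N,d}(X^sym) − 2N)/4 ≥ N²·(1·3·5⋯(p−1)) / (d(d+2)⋯(d+p−2)) − N, and equality holds if and only if X^sym is a spherical p-design. -/

import Mathlib

open scoped RealInnerProductSpace
open Real MeasureTheory

/-- The `p`-frame potential `FP_{p,N,d}(X) = Σ_{k≠ℓ} |⟨x_k,x_ℓ⟩|^p`. -/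
noncomputable def framePotential (d N : ℕ) (p : ℝ)
    (X : Fin N → EuclideanSpace ℝ (Fin d)) : ℝ :=
  ∑ k : Fin N, ∑ l : Fin N, if k ≠ l then |⟪X k, X l⟫| ^ p else 0

/-- The coherence `c(X) = max_{k≠ℓ} |⟨x_k,x_ℓ⟩|`. -/
noncomputable def coherence (d N : ℕ) (X : Fin N → EuclideanSpace ℝ (Fin d)) : ℝ :=
  sSup {v | ∃ k l : Fin N, k ≠ l ∧ v = |⟪X k, X l⟫|}

/-- The normalized (uniform probability) surface measure on the unit sphere
`S^{d-1} ⊂ ℝ^d`. -/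
noncomputable def sphereUniform (d : ℕ) :
    Measure (Metric.sphere (0 : EuclideanSpace ℝ (Fin d)) 1) :=
  (((volume : Measure (EuclideanSpace ℝ (Fin d))).toSphere) Set.univ)⁻¹ •
    ((volume : Measure (EuclideanSpace ℝ (Fin d))).toSphere)

/-- A tuple of `M` points of the unit sphere `S^{d-1}` is a spherical `t`-design if every
polynomial of degree at most `t` has the same average over the tuple as over the sphere. -/
def IsSphericalDesign (d t M : ℕ) (Y : Fin M → EuclideanSpace ℝ (Fin d)) : Prop :=
  ∀ h : MvPolynomial (Fin d) ℝ, h.totalDegree ≤ t →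
    ∫ x, MvPolynomial.eval (fun i => (x : EuclideanSpace ℝ (Fin d)) i) h ∂(sphereUniform d) =
      (1 / (M : ℝ)) * ∑ k : Fin M, MvPolynomial.eval (fun i => Y k i) h

/-!
Averaging over the nodes minus averaging over the sphere is a linear functional `D` on polynomials.
Since `⟪y, z⟫ ^ p` is the sum over all words `w` of length `p` of `y ^ w * z ^ w`, the sum of
`D (x ^ w) ^ 2` equals `N⁻²` times the sum of all `⟪x_k, x_l⟫ ^ p` minus the `p`-th moment of a
linear form on the sphere. Hence the gap in the inequality is `N²` times a sum of squares, and
equality means that `D` kills every homogeneous polynomial of degree `p`. For the symmetrized tuple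
this already gives a `p`-design: odd degrees vanish by antipodal symmetry, and a polynomial of lower
even degree can be multiplied by a power of `|x|² = 1` without changing its values on the sphere.

The spherical moments come from integrating `⟪x, y⟫ ^ p * exp (-‖y‖ ^ 2)` over the whole space, in
polar coordinates and in an orthonormal basis that contains `x`.
-/

lemma integral_volumeIoiPow (n : ℕ) (g : ℝ → ℝ) :
    ∫ r : Set.Ioi (0 : ℝ), g r ∂(Measure.volumeIoiPow n) =
      ∫ r in Set.Ioi (0 : ℝ), r ^ n * g r := by
  simp only [Measure.volumeIoiPow, ENNReal.ofReal]
  rw [integral_withDensity_eq_integral_smul (measurable_subtype_coe.pow_const _).real_toNNReal,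
    integral_subtype_comap measurableSet_Ioi fun r : ℝ ↦ Real.toNNReal (r ^ n) • g r]
  refine setIntegral_congr_fun measurableSet_Ioi fun r (hr : 0 < r) ↦ ?_
  simp only [NNReal.smul_def, Real.coe_toNNReal _ (pow_nonneg hr.le n), smul_eq_mul]

lemma integral_Ioi_pow_mul_exp_neg_sq (n : ℕ) :
    ∫ r in Set.Ioi (0 : ℝ), r ^ n * exp (-r ^ 2) = Gamma ((n + 1) / 2) / 2 := by
  have h := integral_rpow_mul_exp_neg_rpow two_pos (neg_one_lt_zero.trans_le n.cast_nonneg)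
  simp only [rpow_natCast, rpow_two] at h
  rw [h]
  ring

lemma integral_pow_mul_exp_neg_sq {q : ℕ} (hq : Even q) :
    ∫ t : ℝ, t ^ q * exp (-t ^ 2) = Gamma ((q + 1) / 2) := by
  have habs := integral_comp_abs (f := fun t : ℝ ↦ t ^ q * exp (-t ^ 2))
  simp only [hq.pow_abs, sq_abs] at habs
  rw [habs, integral_Ioi_pow_mul_exp_neg_sq]
  ring

lemma integral_exp_neg_sq : ∫ t : ℝ, exp (-t ^ 2) = √π := by
  simpa using integral_gaussian 1

lemma Gamma_add_natCast_eq_prod_mul {a : ℝ} (ha : 0 < a) (m : ℕ) :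
    Gamma (a + m) = (∏ i ∈ Finset.range m, (a + i)) * Gamma a := by
  induction m with
  | zero => simp
  | succ m ih =>
    rw [Finset.prod_range_succ, Nat.cast_succ, ← add_assoc, Gamma_add_one (by positivity), ih]
    ring

section Polar

variable {E : Type*} [NormedAddCommGroup E] [NormedSpace ℝ E] [MeasurableSpace E] [BorelSpace E]

instance isNegInvariant_toSphere (μ : Measure E) [μ.IsNegInvariant] :
    μ.toSphere.IsNegInvariant where
  neg_eq_self := by
    ext s hs
    have himage : ((↑) '' (Neg.neg ⁻¹' s) : Set E) = -((↑) '' s) := by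
      rw [Set.neg_preimage, ← Set.image_neg_eq_neg, ← Set.image_neg_eq_neg, Set.image_image,
        Set.image_image]
      rfl
    rw [Measure.neg, Measure.map_apply measurable_neg hs, μ.toSphere_apply' (measurable_neg hs),
      μ.toSphere_apply' hs, himage, Set.smul_neg, Measure.measure_neg]

lemma integral_toSphere_eq_zero_of_odd {F : Type*} [NormedAddCommGroup F] [NormedSpace ℝ F]
    (μ : Measure E) [μ.IsNegInvariant] {f : Metric.sphere (0 : E) 1 → F}
    (hf : ∀ s, f (-s) = -f s) : ∫ s, f s ∂μ.toSphere = 0 := by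
  have h : ∫ s, f (-s) ∂μ.toSphere = ∫ s, f s ∂μ.toSphere :=
    (Measure.measurePreserving_neg μ.toSphere).integral_comp
      (Homeomorph.neg _).measurableEmbedding f
  rw [integral_congr_ae (.of_forall hf), integral_neg] at h
  have : IsAddTorsionFree F := .of_isTorsionFree ℝ F
  exact self_eq_neg.1 h.symm

variable [FiniteDimensional ℝ E] [Nontrivial E] (μ : Measure E) [μ.IsAddHaarMeasure]

lemma integral_homogeneous_mul_fun_norm {q : ℕ} {f : E → ℝ}
    (hf : ∀ r : ℝ, 0 < r → ∀ y, f (r • y) = r ^ q * f y) (g : ℝ → ℝ) :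
    ∫ y, f y * g ‖y‖ ∂μ = (∫ s, f s ∂μ.toSphere) *
      ∫ r in Set.Ioi (0 : ℝ), r ^ (Module.finrank ℝ E - 1 + q) * g r := by
  have hpolar (x : ({0}ᶜ : Set E)) :
      f x * g ‖(x : E)‖ = f (‖(x : E)‖⁻¹ • (x : E)) * (‖(x : E)‖ ^ q * g ‖(x : E)‖) := by
    have hx : 0 < ‖(x : E)‖ := norm_pos_iff.2 x.2
    rw [hf _ (inv_pos.2 hx), inv_pow]
    field_simp
  calc ∫ y, f y * g ‖y‖ ∂μ
      = ∫ x : ({0}ᶜ : Set E), f x * g ‖(x : E)‖ ∂(μ.comap (↑)) := by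
        rw [integral_subtype_comap (measurableSet_singleton _).compl fun x ↦ f x * g ‖x‖,
          restrict_compl_singleton]
    _ = ∫ z : Metric.sphere (0 : E) 1 × Set.Ioi (0 : ℝ), f z.1 * ((z.2 : ℝ) ^ q * g z.2)
          ∂(μ.toSphere.prod (.volumeIoiPow (Module.finrank ℝ E - 1))) := by
        simpa only [hpolar, homeomorphUnitSphereProd_apply_fst_coe,
            homeomorphUnitSphereProd_apply_snd_coe] using
          μ.measurePreserving_homeomorphUnitSphereProd.integral_comp
          (Homeomorph.measurableEmbedding _)
          fun z : Metric.sphere (0 : E) 1 × Set.Ioi (0 : ℝ) ↦ f z.1 * ((z.2 : ℝ) ^ q * g z.2)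
    _ = (∫ s, f s ∂μ.toSphere) *
          ∫ r : Set.Ioi (0 : ℝ), (r : ℝ) ^ q * g r ∂.volumeIoiPow (Module.finrank ℝ E - 1) :=
        integral_prod_mul (fun s : Metric.sphere (0 : E) 1 ↦ f s)
          fun r : Set.Ioi (0 : ℝ) ↦ (r : ℝ) ^ q * g r
    _ = _ := by
        simp only [integral_volumeIoiPow _ fun r ↦ r ^ q * g r, pow_add, mul_assoc]

lemma integral_homogeneous_mul_exp_neg_norm_sq {q : ℕ} {f : E → ℝ}
    (hf : ∀ r : ℝ, 0 < r → ∀ y, f (r • y) = r ^ q * f y) :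
    ∫ y, f y * exp (-‖y‖ ^ 2) ∂μ =
      (∫ s, f s ∂μ.toSphere) * (Gamma ((Module.finrank ℝ E + q) / 2) / 2) := by
  have hdim : 1 ≤ Module.finrank ℝ E := Module.finrank_pos
  rw [integral_homogeneous_mul_fun_norm μ hf fun r ↦ exp (-r ^ 2), integral_Ioi_pow_mul_exp_neg_sq]
  push_cast [hdim]
  ring_nf

lemma average_toSphere_mul_Gamma {q : ℕ} {f : E → ℝ}
    (hf : ∀ r : ℝ, 0 < r → ∀ y, f (r • y) = r ^ q * f y) :
    (⨍ s, f s ∂μ.toSphere) * Gamma ((Module.finrank ℝ E + q) / 2) *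
        ∫ y, exp (-‖y‖ ^ 2) ∂μ =
      (∫ y, f y * exp (-‖y‖ ^ 2) ∂μ) * Gamma (Module.finrank ℝ E / 2) := by
  have hone := integral_homogeneous_mul_exp_neg_norm_sq μ (q := 0) (f := fun _ ↦ 1) (by simp)
  simp only [one_mul, integral_const, smul_eq_mul, mul_one, Nat.cast_zero, add_zero] at hone
  have hμ : μ.toSphere.real Set.univ ≠ 0 := by
    rw [Ne, measureReal_eq_zero_iff, Measure.measure_univ_eq_zero]
    exact Measure.toSphere_ne_zero μ
  rw [integral_homogeneous_mul_exp_neg_norm_sq μ hf, hone, average_eq, smul_eq_mul]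
  field_simp

end Polar

section Gaussian

variable {E : Type*} [NormedAddCommGroup E] [InnerProductSpace ℝ E] [FiniteDimensional ℝ E]

lemma exists_orthonormalBasis_apply_eq {n : ℕ} (hn : Module.finrank ℝ E = n + 1) {x : E}
    (hx : ‖x‖ = 1) : ∃ b : OrthonormalBasis (Fin (n + 1)) ℝ E, b 0 = x := by
  have hortho : Orthonormal ℝ (({0} : Set (Fin (n + 1))).domRestrict fun _ ↦ x) := by
    have : Subsingleton ({0} : Set (Fin (n + 1))) := by infer_instance
    exact ⟨fun _ ↦ hx, fun i j hij ↦ absurd (Subsingleton.elim i j) hij⟩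
  obtain ⟨b, hb⟩ := hortho.exists_orthonormalBasis_extension_of_card_eq (by simpa using hn)
  exact ⟨b, hb 0 rfl⟩

variable [MeasurableSpace E] [BorelSpace E]

lemma integral_eq_integral_orthonormalBasis_repr_symm {ι : Type*} [Fintype ι]
    (b : OrthonormalBasis ι ℝ E) (F : E → ℝ) :
    ∫ y, F y = ∫ v : ι → ℝ, F (b.repr.symm (WithLp.toLp 2 v)) := by
  rw [← b.measurePreserving_repr_symm.integral_comp b.repr.symm.toHomeomorph.measurableEmbedding,
    ← (PiLp.volume_preserving_toLp ι).integral_comp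
      (MeasurableEquiv.toLp 2 (ι → ℝ)).measurableEmbedding]

lemma integral_comp_inner_mul_exp_neg_norm_sq {x : E} (hx : ‖x‖ = 1) (g : ℝ → ℝ) :
    ∫ y : E, g ⟪x, y⟫ * exp (-‖y‖ ^ 2) =
      (∫ t, g t * exp (-t ^ 2)) * √π ^ (Module.finrank ℝ E - 1) := by
  have : Nontrivial E := ⟨x, 0, by rintro rfl; simp at hx⟩
  obtain ⟨n, hn⟩ := Nat.exists_eq_add_one.2 (Module.finrank_pos (R := ℝ) (M := E))
  obtain ⟨b, rfl⟩ := exists_orthonormalBasis_apply_eq hn hx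
  let factor : Fin (n + 1) → ℝ → ℝ := Fin.cons (fun t ↦ g t * exp (-t ^ 2)) fun _ t ↦ exp (-t ^ 2)
  have hfactor (v : Fin (n + 1) → ℝ) :
      g ⟪b 0, b.repr.symm (WithLp.toLp 2 v)⟫ * exp (-‖b.repr.symm (WithLp.toLp 2 v)‖ ^ 2) =
        ∏ i, factor i (v i) := by
    rw [← b.repr_apply_apply, LinearIsometryEquiv.apply_symm_apply, LinearIsometryEquiv.norm_map,
      EuclideanSpace.norm_sq_eq, Fin.sum_univ_succ, Fin.prod_univ_succ, neg_add, exp_add,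
      ← Finset.sum_neg_distrib, exp_sum, ← mul_assoc]
    simp [factor]
  simp only [integral_eq_integral_orthonormalBasis_repr_symm b, hfactor,
    integral_fintype_prod_volume_eq_prod]
  rw [Fin.prod_univ_succ, hn]
  simp [factor, integral_exp_neg_sq]

lemma average_sphere_inner_pow (m : ℕ) {x : E} (hx : ‖x‖ = 1) :
    ⨍ s : Metric.sphere (0 : E) 1, ⟪x, s⟫ ^ (2 * m) ∂(volume : Measure E).toSphere =
      ∏ i ∈ Finset.range m, ((2 * (i : ℝ) + 1) / ((Module.finrank ℝ E : ℝ) + 2 * i)) := by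
  have : Nontrivial E := ⟨x, 0, by rintro rfl; simp at hx⟩
  set d := Module.finrank ℝ E
  have hd : 0 < (d : ℝ) / 2 := by have : 0 < d := Module.finrank_pos; positivity
  have hgauss : ∫ y : E, exp (-‖y‖ ^ 2) = √π * √π ^ (d - 1) := by
    simpa [integral_exp_neg_sq] using integral_comp_inner_mul_exp_neg_norm_sq hx fun _ ↦ 1
  have havg := average_toSphere_mul_Gamma volume (q := 2 * m) (f := fun y : E ↦ ⟪x, y⟫ ^ (2 * m))
    fun r _ y ↦ by rw [inner_smul_right, mul_pow]
  rw [hgauss, integral_comp_inner_mul_exp_neg_norm_sq hx fun t ↦ t ^ (2 * m),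
    integral_pow_mul_exp_neg_sq (even_two_mul m),
    show (((2 * m : ℕ) : ℝ) + 1) / 2 = 1 / 2 + m by push_cast; ring,
    show ((d : ℝ) + (2 * m : ℕ)) / 2 = d / 2 + m by push_cast; ring,
    Gamma_add_natCast_eq_prod_mul hd, Gamma_add_natCast_eq_prod_mul one_half_pos,
    Gamma_one_half_eq] at havg
  have hprod : 0 < ∏ i ∈ Finset.range m, ((d : ℝ) / 2 + i) :=
    Finset.prod_pos fun i _ ↦ by positivity
  have hscale : √π * √π ^ (d - 1) * Gamma (d / 2) ≠ 0 := by
    have := Gamma_pos_of_pos hd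
    positivity
  calc
    _ = (∏ i ∈ Finset.range m, (1 / 2 + (i : ℝ))) /
          ∏ i ∈ Finset.range m, ((d : ℝ) / 2 + i) := by
        rw [eq_div_iff hprod.ne']
        apply mul_right_cancel₀ hscale
        linear_combination havg
    _ = _ := by
        rw [← Finset.prod_div_distrib]
        refine Finset.prod_congr rfl fun i _ ↦ ?_
        field_simp
        ring

end Gaussian

section HomogeneousPolynomials

open MvPolynomial

lemma eval_smul_of_isHomogeneous {σ R : Type*} [CommSemiring R] {φ : MvPolynomial σ R} {n : ℕ}
    (hφ : φ.IsHomogeneous n) (c : R) (y : σ → R) : eval (c • y) φ = c ^ n * eval y φ := by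
  rw [eval_eq, eval_eq, Finset.mul_sum]
  refine Finset.sum_congr rfl fun e he ↦ ?_
  have hdeg : ∑ i ∈ e.support, e i = n :=
    (DFunLike.congr_fun Finsupp.degree_eq_weight_one e).trans (hφ (mem_support_iff.1 he))
  simp only [Pi.smul_apply, smul_eq_mul, mul_pow, Finset.prod_mul_distrib,
    Finset.prod_pow_eq_pow_sum, hdeg]
  ring

lemma homogeneousSubmodule_eq_span_prod_X (σ R : Type*) [CommSemiring R] (n : ℕ) :
    homogeneousSubmodule σ R n =
      Submodule.span R (Set.range fun i : Fin n → σ ↦ ∏ j, (X (i j) : MvPolynomial σ R)) := by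
  rw [← homogeneousSubmodule_one_pow, homogeneousSubmodule_one_eq_span_X, Submodule.span_pow]
  congr 1
  ext φ
  rw [Set.mem_pow_iff_prod]
  constructor
  · rintro ⟨f, hf, rfl⟩
    choose i hi using hf
    exact ⟨i, by simp only [hi]⟩
  · rintro ⟨i, rfl⟩
    exact ⟨fun j ↦ X (i j), fun j ↦ ⟨i j, rfl⟩, rfl⟩

lemma forall_isHomogeneous_map_eq_zero_iff {σ R M : Type*} [CommSemiring R] [AddCommMonoid M]
    [Module R M] (L : MvPolynomial σ R →ₗ[R] M) (n : ℕ) :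
    (∀ φ : MvPolynomial σ R, φ.IsHomogeneous n → L φ = 0) ↔
      ∀ i : Fin n → σ, L (∏ j, X (i j)) = 0 := by
  have h : homogeneousSubmodule σ R n ≤ LinearMap.ker L ↔
      ∀ i : Fin n → σ, L (∏ j, X (i j)) = 0 := by
    rw [homogeneousSubmodule_eq_span_prod_X, Submodule.span_le, Set.range_subset_iff]
    rfl
  exact h

/-- The linear form `⟪y, ·⟫` as a polynomial. -/
noncomputable def innerPolynomial {σ : Type*} [Fintype σ] (y : EuclideanSpace ℝ σ) :
    MvPolynomial σ ℝ :=
  ∑ a, y a • X a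

variable {σ : Type*} [Fintype σ] (y z : EuclideanSpace ℝ σ)

lemma eval_innerPolynomial : eval (fun a ↦ z a) (innerPolynomial y) = ⟪y, z⟫ := by
  simp [innerPolynomial, PiLp.inner_apply, smul_eval, mul_comm]

lemma innerPolynomial_pow (n : ℕ) :
    innerPolynomial y ^ n =
      ∑ i : Fin n → σ, eval (fun a ↦ y a) (∏ j, X (i j)) • ∏ j, X (i j) := by
  simp only [innerPolynomial, Fintype.sum_pow, map_prod, eval_X, Finset.prod_smul]

lemma eval_sum_X_sq_eq_one (hy : ‖y‖ = 1) : eval (fun a ↦ y a) (∑ a, X a ^ 2) = 1 := by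
  simp only [map_sum, map_pow, eval_X, ← EuclideanSpace.real_norm_sq_eq, hy, one_pow]

end HomogeneousPolynomials

section SphereUniform

variable {d : ℕ}

instance isZeroOrProbabilityMeasure_sphereUniform :
    IsZeroOrProbabilityMeasure (sphereUniform d) :=
  isZeroOrProbabilityMeasureSMul

instance isProbabilityMeasure_sphereUniform [NeZero d] :
    IsProbabilityMeasure (sphereUniform d) := by
  have : NeZero (volume : Measure (EuclideanSpace ℝ (Fin d))).toSphere :=
    ⟨Measure.toSphere_ne_zero volume⟩
  exact isProbabilityMeasureSMul

lemma integral_sphereUniform_eq_zero_of_odd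
    {f : Metric.sphere (0 : EuclideanSpace ℝ (Fin d)) 1 → ℝ} (hf : ∀ s, f (-s) = -f s) :
    ∫ s, f s ∂sphereUniform d = 0 := by
  rw [sphereUniform, integral_smul_measure, integral_toSphere_eq_zero_of_odd volume hf, smul_zero]

lemma integral_sphereUniform_inner_pow (m : ℕ) {y : EuclideanSpace ℝ (Fin d)} (hy : ‖y‖ = 1) :
    ∫ s, ⟪y, s⟫ ^ (2 * m) ∂sphereUniform d =
      ∏ i ∈ Finset.range m, ((2 * (i : ℝ) + 1) / ((d : ℝ) + 2 * i)) := by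
  have h := average_sphere_inner_pow m hy
  rw [finrank_euclideanSpace_fin] at h
  exact h

lemma integrable_eval_sphereUniform (h : MvPolynomial (Fin d) ℝ) :
    Integrable (fun s : Metric.sphere (0 : EuclideanSpace ℝ (Fin d)) 1 ↦
      MvPolynomial.eval (fun i ↦ (s : EuclideanSpace ℝ (Fin d)) i) h) (sphereUniform d) := by
  have hcont : Continuous fun s : Metric.sphere (0 : EuclideanSpace ℝ (Fin d)) 1 ↦
      MvPolynomial.eval (fun i ↦ (s : EuclideanSpace ℝ (Fin d)) i) h :=
    (MvPolynomial.continuous_eval h).comp (by fun_prop)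
  exact hcont.integrable_of_hasCompactSupport (.of_compactSpace _)

end SphereUniform

section Designs

open MvPolynomial

variable {d N : ℕ}

/-- The error of the cubature formula on the sphere with nodes `X` and equal weights, as a linear
functional on polynomials. The tuple `X` is a spherical `t`-design when it vanishes in degree at
most `t`. -/
noncomputable def designDefect (X : Fin N → EuclideanSpace ℝ (Fin d)) :
    MvPolynomial (Fin d) ℝ →ₗ[ℝ] ℝ where
  toFun h := 1 / (N : ℝ) * ∑ k, eval (fun i ↦ X k i) h -
    ∫ s, eval (fun i ↦ (s : EuclideanSpace ℝ (Fin d)) i) h ∂sphereUniform d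
  map_add' h₁ h₂ := by
    simp only [map_add, Finset.sum_add_distrib]
    rw [integral_add (integrable_eval_sphereUniform h₁) (integrable_eval_sphereUniform h₂)]
    ring
  map_smul' c h := by
    simp only [smul_eval, integral_const_mul, ← Finset.mul_sum, RingHom.id_apply, smul_eq_mul]
    ring

lemma designDefect_apply (X : Fin N → EuclideanSpace ℝ (Fin d)) (h : MvPolynomial (Fin d) ℝ) :
    designDefect X h = 1 / (N : ℝ) * ∑ k, eval (fun i ↦ X k i) h -
      ∫ s, eval (fun i ↦ (s : EuclideanSpace ℝ (Fin d)) i) h ∂sphereUniform d :=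
  rfl

lemma isSphericalDesign_iff_designDefect_eq_zero {t : ℕ} {X : Fin N → EuclideanSpace ℝ (Fin d)} :
    IsSphericalDesign d t N X ↔
      ∀ h : MvPolynomial (Fin d) ℝ, h.totalDegree ≤ t → designDefect X h = 0 := by
  refine forall₂_congr fun h _ ↦ ?_
  rw [designDefect_apply, sub_eq_zero, eq_comm]

lemma designDefect_innerPolynomial_pow (X : Fin N → EuclideanSpace ℝ (Fin d)) (m : ℕ)
    {y : EuclideanSpace ℝ (Fin d)} (hy : ‖y‖ = 1) :
    designDefect X (innerPolynomial y ^ (2 * m)) =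
      1 / (N : ℝ) * ∑ k, ⟪y, X k⟫ ^ (2 * m) -
        ∏ i ∈ Finset.range m, ((2 * (i : ℝ) + 1) / ((d : ℝ) + 2 * i)) := by
  simp only [designDefect_apply, map_pow, eval_innerPolynomial,
    integral_sphereUniform_inner_pow m hy]

lemma sum_designDefect_prod_X_sq {X : Fin N → EuclideanSpace ℝ (Fin d)} (hN : N ≠ 0)
    (hX : ∀ k, ‖X k‖ = 1) (m : ℕ) :
    ∑ i : Fin (2 * m) → Fin d, designDefect X (∏ j, MvPolynomial.X (i j)) ^ 2 =
      1 / (N : ℝ) ^ 2 * ∑ k, ∑ l, ⟪X k, X l⟫ ^ (2 * m) -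
        ∏ i ∈ Finset.range m, ((2 * (i : ℝ) + 1) / ((d : ℝ) + 2 * i)) := by
  set moment := ∏ i ∈ Finset.range m, ((2 * (i : ℝ) + 1) / ((d : ℝ) + 2 * i)) with hmoment
  have : NeZero d := ⟨by
    rintro rfl
    let k : Fin N := ⟨0, Nat.pos_of_ne_zero hN⟩
    exact one_ne_zero ((hX k).symm.trans (norm_of_subsingleton (X k)))⟩
  -- With the monomial defects as coefficients, the sum of their squares becomes the defect of a
  -- single polynomial, whose values are again defects of powers of linear forms.
  let representer : MvPolynomial (Fin d) ℝ :=
    ∑ i : Fin (2 * m) → Fin d,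
      designDefect X (∏ j, MvPolynomial.X (i j)) • ∏ j, MvPolynomial.X (i j)
  have heval {y : EuclideanSpace ℝ (Fin d)} (hy : ‖y‖ = 1) :
      eval (fun i ↦ y i) representer = 1 / (N : ℝ) * ∑ k, ⟪y, X k⟫ ^ (2 * m) - moment := by
    rw [hmoment, ← designDefect_innerPolynomial_pow X m hy, innerPolynomial_pow]
    simp only [representer, map_sum, map_smul, smul_eval, smul_eq_mul, mul_comm]
  have hintegral :
      ∫ s, eval (fun i ↦ (s : EuclideanSpace ℝ (Fin d)) i) representer ∂sphereUniform d = 0 := by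
    have hint (k : Fin N) : Integrable (fun s : Metric.sphere (0 : EuclideanSpace ℝ (Fin d)) 1 ↦
        ⟪(s : EuclideanSpace ℝ (Fin d)), X k⟫ ^ (2 * m)) (sphereUniform d) := by
      simpa only [map_pow, eval_innerPolynomial, real_inner_comm] using
        integrable_eval_sphereUniform (innerPolynomial (X k) ^ (2 * m))
    simp only [heval (norm_eq_of_mem_sphere _)]
    rw [integral_sub ((integrable_finsetSum _ fun k _ ↦ hint k).const_mul _)
      (integrable_const _), integral_const_mul, integral_finsetSum _ fun k _ ↦ hint k]
    simp only [real_inner_comm (X _), integral_sphereUniform_inner_pow m (hX _), ← hmoment]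
    simp [hN]
  calc ∑ i : Fin (2 * m) → Fin d, designDefect X (∏ j, MvPolynomial.X (i j)) ^ 2
      = designDefect X representer := by
        simp only [representer, map_sum, map_smul, smul_eq_mul, sq]
    _ = 1 / (N : ℝ) * ∑ k, (1 / (N : ℝ) * ∑ l, ⟪X k, X l⟫ ^ (2 * m) - moment) := by
        simp only [designDefect_apply X representer, hintegral, heval (hX _), sub_zero]
    _ = 1 / (N : ℝ) ^ 2 * ∑ k, ∑ l, ⟪X k, X l⟫ ^ (2 * m) - moment := by
        rw [Finset.sum_sub_distrib, ← Finset.mul_sum, Finset.sum_const, Finset.card_univ,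
          Fintype.card_fin, nsmul_eq_mul]
        field_simp

lemma designDefect_mul_sum_X_sq_pow {X : Fin N → EuclideanSpace ℝ (Fin d)} (hX : ∀ k, ‖X k‖ = 1)
    (h : MvPolynomial (Fin d) ℝ) (n : ℕ) :
    designDefect X (h * (∑ a, MvPolynomial.X a ^ 2) ^ n) = designDefect X h := by
  simp only [designDefect_apply, map_mul, map_pow, eval_sum_X_sq_eq_one, hX, norm_eq_of_mem_sphere,
    one_pow, mul_one]

end Designs

section Symmetrization

open MvPolynomial

variable {d N : ℕ}

/-- The antipodal symmetrization `X^sym = (x₁, …, x_N, -x₁, …, -x_N)`. -/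
def symmetrization {E : Type*} [Neg E] (X : Fin N → E) : Fin (2 * N) → E :=
  Fin.append X (fun k ↦ -X k) ∘ Fin.cast (two_mul N)

lemma sum_comp_symmetrization {E M : Type*} [Neg E] [AddCommMonoid M] (X : Fin N → E) (f : E → M) :
    ∑ i, f (symmetrization X i) = ∑ k, (f (X k) + f (-X k)) := by
  rw [← (finCongr (two_mul N)).symm.sum_comp, Fin.sum_univ_add, Finset.sum_add_distrib]
  simp only [symmetrization, Function.comp_apply, finCongr_symm, finCongr_apply, Fin.cast_cast,
    Fin.cast_eq_self, Fin.append_left, Fin.append_right]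

lemma symmetrization_apply {E : Type*} [Neg E] (X : Fin N → E) (i : Fin (2 * N)) :
    symmetrization X i = if h : (i : ℕ) < N then X ⟨i, h⟩ else -X ⟨i - N, by omega⟩ := by
  simp only [symmetrization, Function.comp_apply, Fin.append, Fin.addCases, eq_rec_constant]
  rfl

lemma norm_symmetrization_eq_one {E : Type*} [SeminormedAddGroup E] {X : Fin N → E}
    (hX : ∀ k, ‖X k‖ = 1) (i : Fin (2 * N)) : ‖symmetrization X i‖ = 1 := by
  rw [symmetrization_apply]
  split_ifs <;> simp only [norm_neg, hX]

lemma sum_inner_symmetrization_pow {E : Type*} [NormedAddCommGroup E] [InnerProductSpace ℝ E]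
    (X : Fin N → E) {p : ℕ} (hp : Even p) :
    ∑ k, ∑ l, ⟪symmetrization X k, symmetrization X l⟫ ^ p = 4 * ∑ k, ∑ l, ⟪X k, X l⟫ ^ p := by
  have hdouble (f : E → ℝ) (hf : ∀ y, f (-y) = f y) :
      ∑ i, f (symmetrization X i) = 2 * ∑ k, f (X k) := by
    simp only [sum_comp_symmetrization, hf, ← two_mul, Finset.mul_sum]
  have hright (y : E) :
      ∑ l, ⟪y, symmetrization X l⟫ ^ p = 2 * ∑ l, ⟪y, X l⟫ ^ p :=
    hdouble (fun z ↦ ⟪y, z⟫ ^ p) fun z ↦ by rw [inner_neg_right, hp.neg_pow]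
  have hleft := hdouble (fun y ↦ ∑ l, ⟪y, X l⟫ ^ p) fun y ↦ by
    simp only [inner_neg_left, hp.neg_pow]
  rw [Finset.sum_congr rfl fun k _ ↦ hright _, ← Finset.mul_sum, hleft]
  ring

lemma eval_neg_of_isHomogeneous {h : MvPolynomial (Fin d) ℝ} {n : ℕ} (hh : h.IsHomogeneous n)
    (y : EuclideanSpace ℝ (Fin d)) :
    eval (fun i ↦ (-y) i) h = (-1) ^ n * eval (fun i ↦ y i) h := by
  rw [← eval_smul_of_isHomogeneous hh (-1)]
  congr 2
  ext i
  simp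

lemma designDefect_symmetrization_of_even (X : Fin N → EuclideanSpace ℝ (Fin d))
    {h : MvPolynomial (Fin d) ℝ} {n : ℕ} (hh : h.IsHomogeneous n) (hn : Even n) :
    designDefect (symmetrization X) h = designDefect X h := by
  rw [designDefect_apply, designDefect_apply,
    sum_comp_symmetrization X fun y ↦ eval (fun i ↦ y i) h]
  simp only [eval_neg_of_isHomogeneous hh, hn.neg_one_pow, one_mul, ← two_mul, ← Finset.mul_sum]
  push_cast
  ring

lemma designDefect_symmetrization_of_odd (X : Fin N → EuclideanSpace ℝ (Fin d))
    {h : MvPolynomial (Fin d) ℝ} {n : ℕ} (hh : h.IsHomogeneous n) (hn : Odd n) :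
    designDefect (symmetrization X) h = 0 := by
  have heval (y : EuclideanSpace ℝ (Fin d)) :
      eval (fun i ↦ (-y) i) h = -eval (fun i ↦ y i) h := by
    rw [eval_neg_of_isHomogeneous hh, hn.neg_one_pow, neg_one_mul]
  rw [designDefect_apply, sum_comp_symmetrization X fun y ↦ eval (fun i ↦ y i) h,
    integral_sphereUniform_eq_zero_of_odd fun s ↦ heval s]
  simp only [heval, add_neg_cancel, Finset.sum_const_zero, mul_zero, sub_zero]

lemma designDefect_symmetrization_eq_zero {X : Fin N → EuclideanSpace ℝ (Fin d)}
    (hX : ∀ k, ‖X k‖ = 1) {p n : ℕ} (hp : Even p) (hnp : n ≤ p)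
    (hzero : ∀ h : MvPolynomial (Fin d) ℝ, h.IsHomogeneous p → designDefect X h = 0)
    {h : MvPolynomial (Fin d) ℝ} (hh : h.IsHomogeneous n) :
    designDefect (symmetrization X) h = 0 := by
  obtain hn | hn := n.even_or_odd
  · obtain ⟨r, hr⟩ : ∃ r, p = n + 2 * r := by
      obtain ⟨r, hr⟩ := (Nat.even_sub hnp).2 (iff_of_true hp hn)
      exact ⟨r, by omega⟩
    have hlift : (h * (∑ a, MvPolynomial.X a ^ 2) ^ r).IsHomogeneous p := by
      have hsq : (∑ a : Fin d, (MvPolynomial.X a : MvPolynomial (Fin d) ℝ) ^ 2).IsHomogeneous 2 :=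
        IsHomogeneous.sum _ _ _ fun a _ ↦ isHomogeneous_X_pow a 2
      exact hr ▸ hh.mul (hsq.pow r)
    rw [designDefect_symmetrization_of_even X hh hn, ← designDefect_mul_sum_X_sq_pow hX h r,
      hzero _ hlift]
  · exact designDefect_symmetrization_of_odd X hh hn

lemma isSphericalDesign_symmetrization_iff {X : Fin N → EuclideanSpace ℝ (Fin d)}
    (hX : ∀ k, ‖X k‖ = 1) {p : ℕ} (hp : Even p) :
    IsSphericalDesign d p (2 * N) (symmetrization X) ↔
      ∀ i : Fin p → Fin d, designDefect X (∏ j, MvPolynomial.X (i j)) = 0 := by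
  rw [isSphericalDesign_iff_designDefect_eq_zero, ← forall_isHomogeneous_map_eq_zero_iff]
  constructor
  · intro hdesign h hh
    rw [← designDefect_symmetrization_of_even X hh hp]
    exact hdesign h hh.totalDegree_le
  · intro hzero h hdeg
    rw [← h.sum_homogeneousComponent, map_sum]
    refine Finset.sum_eq_zero fun n hn ↦ designDefect_symmetrization_eq_zero hX hp ?_ hzero
      (homogeneousComponent_isHomogeneous n h)
    exact (Nat.lt_succ_iff.1 (Finset.mem_range.1 hn)).trans hdeg

end Symmetrization

section FramePotential

variable {d N p : ℕ} {X : Fin N → EuclideanSpace ℝ (Fin d)}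

lemma framePotential_eq_sum_inner_pow_sub (hp : Even p) (hX : ∀ k, ‖X k‖ = 1) :
    framePotential d N p X = (∑ k, ∑ l, ⟪X k, X l⟫ ^ p) - N := by
  have hterm (k l : Fin N) : (if k ≠ l then |⟪X k, X l⟫| ^ (p : ℝ) else 0) =
      ⟪X k, X l⟫ ^ p - if k = l then 1 else 0 := by
    obtain rfl | hkl := eq_or_ne k l
    · simp [hX]
    · simp only [hkl, ne_eq, not_false_eq_true, if_true, if_false, rpow_natCast, hp.pow_abs,
        sub_zero]
  simp only [framePotential, hterm, Finset.sum_sub_distrib, Finset.sum_ite_eq, Finset.mem_univ,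
    if_true, Finset.sum_const, Finset.card_univ, Fintype.card_fin, nsmul_eq_mul, mul_one]

lemma framePotential_eq_framePotential_symmetrization (hp : Even p) (hX : ∀ k, ‖X k‖ = 1) :
    framePotential d N p X = (framePotential d (2 * N) p (symmetrization X) - 2 * N) / 4 := by
  rw [framePotential_eq_sum_inner_pow_sub hp hX,
    framePotential_eq_sum_inner_pow_sub hp (norm_symmetrization_eq_one hX),
    sum_inner_symmetrization_pow X hp]
  push_cast
  ring

lemma framePotential_eq_add_sum_designDefect_sq (hN : N ≠ 0) (hX : ∀ k, ‖X k‖ = 1)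
    (hp : Even p) :
    framePotential d N p X =
      (N : ℝ) ^ 2 * (∏ i ∈ Finset.range (p / 2), ((2 * (i : ℝ) + 1) / ((d : ℝ) + 2 * i))) - N +
        (N : ℝ) ^ 2 *
          ∑ i : Fin p → Fin d, designDefect X (∏ j, MvPolynomial.X (i j)) ^ 2 := by
  obtain ⟨m, rfl⟩ := hp.two_dvd
  rw [framePotential_eq_sum_inner_pow_sub hp hX, sum_designDefect_prod_X_sq hN hX,
    Nat.mul_div_cancel_left m two_pos]
  field_simp
  ring

end FramePotential

theorem framePotential_even_lower_bound_general {d N p : ℕ} (hN : N ≠ 0) (hp : Even p)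
    {X : Fin N → EuclideanSpace ℝ (Fin d)} (hX : ∀ k, ‖X k‖ = 1) :
    framePotential d N p X = (framePotential d (2 * N) p (symmetrization X) - 2 * N) / 4 ∧
    (N : ℝ) ^ 2 * (∏ i ∈ Finset.range (p / 2), ((2 * (i : ℝ) + 1) / ((d : ℝ) + 2 * i))) - N ≤
      framePotential d N p X ∧
    (framePotential d N p X =
        (N : ℝ) ^ 2 * (∏ i ∈ Finset.range (p / 2), ((2 * (i : ℝ) + 1) / ((d : ℝ) + 2 * i))) - N ↔
      IsSphericalDesign d p (2 * N) (symmetrization X)) := by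
  refine ⟨framePotential_eq_framePotential_symmetrization hp hX, ?_, ?_⟩
  · rw [framePotential_eq_add_sum_designDefect_sq hN hX hp, le_add_iff_nonneg_right]
    positivity
  · rw [framePotential_eq_add_sum_designDefect_sq hN hX hp, add_eq_left,
      mul_eq_zero_iff_left (by positivity), Finset.sum_eq_zero_iff_of_nonneg fun _ _ ↦ sq_nonneg _,
      isSphericalDesign_symmetrization_iff hX hp]
    simp only [Finset.mem_univ, forall_true_left, sq_eq_zero_iff]

/-- For an even integer `p`, `FP_{p,N,d}(X) = (FP_{p,2N,d}(X^sym) − 2N)/4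
≥ N²·(1·3·5⋯(p−1))/(d(d+2)⋯(d+p−2)) − N`, with equality iff `X^sym` is a
spherical `p`-design. -/
theorem framePotential_even_lower_bound
    (d N : ℕ) (hd : 2 ≤ d) (hN : 2 ≤ N) (p : ℕ) (hp2 : 2 ≤ p) (hpe : Even p)
    (X : Fin N → EuclideanSpace ℝ (Fin d)) (hX : ∀ i, ‖X i‖ = 1)
    (hcoh : coherence d N X < 1)
    (Y : Fin (2 * N) → EuclideanSpace ℝ (Fin d))
    (hY : ∀ i : Fin (2 * N), Y i =
      if h : (i : ℕ) < N then X ⟨(i : ℕ), h⟩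
      else -X ⟨(i : ℕ) - N, by have := i.isLt; omega⟩) :
    framePotential d N (p : ℝ) X = (framePotential d (2 * N) (p : ℝ) Y - 2 * N) / 4 ∧
    (N : ℝ) ^ 2 * (∏ i ∈ Finset.range (p / 2), ((2 * (i : ℝ) + 1) / ((d : ℝ) + 2 * i))) - N ≤
      framePotential d N (p : ℝ) X ∧
    (framePotential d N (p : ℝ) X =
        (N : ℝ) ^ 2 * (∏ i ∈ Finset.range (p / 2), ((2 * (i : ℝ) + 1) / ((d : ℝ) + 2 * i))) - N ↔
      IsSphericalDesign d p (2 * N) Y) := by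
  obtain rfl : Y = symmetrization X := funext fun i ↦ (hY i).trans (symmetrization_apply X i).symm
  exact framePotential_even_lower_bound_general (by omega) hpe hX
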